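/- In the abacus category 𝒟 the trapezium equations hold: for all i,j ≥ -1 (not both -1) and all 0 ≤ m ≤ i+1, 0 ≤ n ≤ j+1, one has f^{∘(m+n+1)} ∘ d^m = e^{i+1} ∘ f^{∘(m+n)} as morphisms [i−m, j+m] → [i+n+1, j−n], where d^m : [i−m,j+m] → [i−m,j+m+1] is a horizontal coface map, e^{i+1} : [i+n,j−n] → [i+n+1,j−n] is the top vertical coface map, and f denotes the appropriate abacus maps. -/

import Mathlib

open CategoryTheory

/-- Objects of the abacus category `𝒟`: the object `[i,j]` (for `i,j ≥ -1`, not both `-1`)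
is encoded by `ip = i+1`, `jp = j+1`, i.e. by the numbers of black and white beads; it
corresponds to the map `(d^⊤)^{∘(1+j)} : [i] → [i+1+j]` in the arrow category of `Δ₊`. -/
structure DObj where
  ip : ℕ
  jp : ℕ
  pos : 0 < ip + jp

theorem DObj.ext2 {a b a' b' : ℕ} {h : 0 < a + b} {h' : 0 < a' + b'}
    (ha : a = a') (hb : b = b') : (⟨a, b, h⟩ : DObj) = ⟨a', b', h'⟩ := by
  subst ha; subst hb; rfl

/-- A morphism `[i,j] → [i',j']` of `𝒟` is a commutative square of monotone maps over the
structure maps; equivalently, a monotone map of the target ordinals sending black beads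
(the first `ip` elements, i.e. the image of the structure map) to black beads. -/
@[ext] structure DHom (A B : DObj) where
  toFun : Fin (A.ip + A.jp) → Fin (B.ip + B.jp)
  mono : Monotone toFun
  black : ∀ k : Fin (A.ip + A.jp), (k : ℕ) < A.ip → (toFun k : ℕ) < B.ip

instance : Category DObj where
  Hom := DHom
  id A := ⟨id, monotone_id, fun _ h => h⟩
  comp f g := ⟨g.toFun ∘ f.toFun, g.mono.comp f.mono, fun k hk => g.black _ (f.black k hk)⟩
  id_comp f := by apply DHom.ext; rfl
  comp_id f := by apply DHom.ext; rfl
  assoc f g h := by apply DHom.ext; rfl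

/-- The vertical coface map `e^k : [i,j] → [i+1,j]`, `0 ≤ k ≤ i+1`. -/
def eM (a b : ℕ) (h : 0 < a + b) (k : Fin (a + 1)) :
    (⟨a, b, h⟩ : DObj) ⟶ ⟨a + 1, b, by omega⟩ where
  toFun x := ⟨if (x : ℕ) < (k : ℕ) then (x : ℕ) else (x : ℕ) + 1, by
    have hx : (x : ℕ) < a + b := x.isLt
    show (if (x : ℕ) < (k : ℕ) then (x : ℕ) else (x : ℕ) + 1) < (a + 1) + b
    split_ifs <;> omega⟩
  mono := by
    intro x y hxy
    have hxy' : (x : ℕ) ≤ (y : ℕ) := hxy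
    simp only [Fin.mk_le_mk]
    split_ifs <;> omega
  black := by
    intro x hx
    have hx' : (x : ℕ) < a := hx
    have hk : (k : ℕ) < a + 1 := k.isLt
    show (if (x : ℕ) < (k : ℕ) then (x : ℕ) else (x : ℕ) + 1) < a + 1
    split_ifs <;> omega

/-- The horizontal coface map `d^k : [i,j] → [i,j+1]`, `0 ≤ k ≤ j+1`. -/
def dM (a b : ℕ) (h : 0 < a + b) (k : Fin (b + 1)) :
    (⟨a, b, h⟩ : DObj) ⟶ ⟨a, b + 1, by omega⟩ where
  toFun x := ⟨if (x : ℕ) < a + (k : ℕ) then (x : ℕ) else (x : ℕ) + 1, by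
    have hx : (x : ℕ) < a + b := x.isLt
    show (if (x : ℕ) < a + (k : ℕ) then (x : ℕ) else (x : ℕ) + 1) < a + (b + 1)
    split_ifs <;> omega⟩
  mono := by
    intro x y hxy
    have hxy' : (x : ℕ) ≤ (y : ℕ) := hxy
    simp only [Fin.mk_le_mk]
    split_ifs <;> omega
  black := by
    intro x hx
    have hx' : (x : ℕ) < a := hx
    show (if (x : ℕ) < a + (k : ℕ) then (x : ℕ) else (x : ℕ) + 1) < a
    split_ifs <;> omega

/-- The abacus map `f : [i,j+1] → [i+1,j]`: the identity on underlying ordinals, turning the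
bottom white bead into a black bead. -/
def fM (a b : ℕ) : (⟨a, b + 1, by omega⟩ : DObj) ⟶ ⟨a + 1, b, by omega⟩ where
  toFun x := ⟨(x : ℕ), by
    have hx : (x : ℕ) < a + (b + 1) := x.isLt
    show (x : ℕ) < (a + 1) + b
    omega⟩
  mono := by intro x y hxy; exact hxy
  black := by
    intro x hx
    have hx' : (x : ℕ) < a := hx
    show (x : ℕ) < a + 1
    omega

/-- The vertical codegeneracy map `t^k : [i+1,j] → [i,j]`, `0 ≤ k ≤ i`. -/
def tM (a b : ℕ) (h : 0 < a + b) (k : Fin a) :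
    (⟨a + 1, b, by omega⟩ : DObj) ⟶ ⟨a, b, h⟩ where
  toFun x := ⟨if (x : ℕ) ≤ (k : ℕ) then (x : ℕ) else (x : ℕ) - 1, by
    have hx : (x : ℕ) < (a + 1) + b := x.isLt
    have hk : (k : ℕ) < a := k.isLt
    show (if (x : ℕ) ≤ (k : ℕ) then (x : ℕ) else (x : ℕ) - 1) < a + b
    split_ifs <;> omega⟩
  mono := by
    intro x y hxy
    have hxy' : (x : ℕ) ≤ (y : ℕ) := hxy
    simp only [Fin.mk_le_mk]
    split_ifs <;> omega
  black := by
    intro x hx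
    have hx' : (x : ℕ) < a + 1 := hx
    have hk : (k : ℕ) < a := k.isLt
    show (if (x : ℕ) ≤ (k : ℕ) then (x : ℕ) else (x : ℕ) - 1) < a
    split_ifs <;> omega

/-- The horizontal codegeneracy map `s^k : [i,j+1] → [i,j]`, `0 ≤ k ≤ j`. -/
def sM (a b : ℕ) (h : 0 < a + b) (k : Fin b) :
    (⟨a, b + 1, by omega⟩ : DObj) ⟶ ⟨a, b, h⟩ where
  toFun x := ⟨if (x : ℕ) ≤ a + (k : ℕ) then (x : ℕ) else (x : ℕ) - 1, by
    have hx : (x : ℕ) < a + (b + 1) := x.isLt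
    have hk : (k : ℕ) < b := k.isLt
    show (if (x : ℕ) ≤ a + (k : ℕ) then (x : ℕ) else (x : ℕ) - 1) < a + b
    split_ifs <;> omega⟩
  mono := by
    intro x y hxy
    have hxy' : (x : ℕ) ≤ (y : ℕ) := hxy
    simp only [Fin.mk_le_mk]
    split_ifs <;> omega
  black := by
    intro x hx
    have hx' : (x : ℕ) < a := hx
    show (if (x : ℕ) ≤ a + (k : ℕ) then (x : ℕ) else (x : ℕ) - 1) < a
    split_ifs <;> omega

/-- The `k`-fold composite `f^{∘k} : [i,j] → [i+k, j-k]` of abacus maps. -/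
def fIter (a b : ℕ) (h : 0 < a + b) : (k : ℕ) → k ≤ b →
    ((⟨a, b, h⟩ : DObj) ⟶ ⟨a + k, b - k, by omega⟩)
  | 0, _ => 𝟙 _
  | (k + 1), hk =>
      fIter a b h k (by omega) ≫ eqToHom (DObj.ext2 rfl (by omega)) ≫
        fM (a + k) (b - (k + 1))

/-!
A morphism of `𝒟` is determined by its map of underlying ordinals. On underlying ordinals the abacus
maps are identities, while the horizontal coface `d^m` out of `[i-m, j+m]` and the vertical coface
`e^{i+1}` out of `[i+n, j-n]` are the same ordinal coface, the one that skips `i+1`.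
-/

namespace DHom

theorem ext_val {A B : DObj} {f g : A ⟶ B}
    (h : ∀ x, (toFun f x : ℕ) = toFun g x) : f = g :=
  DHom.ext (funext fun x => Fin.ext (h x))

theorem comp_toFun {A B C : DObj} (f : A ⟶ B) (g : B ⟶ C) (x : Fin (A.ip + A.jp)) :
    toFun (f ≫ g) x = toFun g (toFun f x) :=
  rfl

theorem eqToHom_toFun_val {A B : DObj} (h : A = B) (x : Fin (A.ip + A.jp)) :
    (toFun (eqToHom h) x : ℕ) = x := by
  subst h
  rfl

theorem eM_toFun_val (a b : ℕ) (h : 0 < a + b) (k : Fin (a + 1)) (x : Fin (a + b)) :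
    (toFun (eM a b h k) x : ℕ) = if (x : ℕ) < k then (x : ℕ) else x + 1 :=
  rfl

theorem dM_toFun_val (a b : ℕ) (h : 0 < a + b) (k : Fin (b + 1)) (x : Fin (a + b)) :
    (toFun (dM a b h k) x : ℕ) = if (x : ℕ) < a + k then (x : ℕ) else x + 1 :=
  rfl

theorem fM_toFun_val (a b : ℕ) (x : Fin (a + (b + 1))) : (toFun (fM a b) x : ℕ) = x :=
  rfl

theorem fIter_toFun_val (a b : ℕ) (h : 0 < a + b) (k : ℕ) (hk : k ≤ b) (x : Fin (a + b)) :
    (toFun (fIter a b h k hk) x : ℕ) = x := by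
  induction k with
  | zero => rfl
  | succ k ih =>
    rw [fIter, comp_toFun, comp_toFun, fM_toFun_val, eqToHom_toFun_val]
    exact ih (by omega)

end DHom

/-- The trapezium equations in the abacus category `𝒟`: for all `i,j ≥ -1`
(not both `-1`; here `ip = i+1`, `jp = j+1`, so `0 < ip + jp`) and all `m ≤ i+1 = ip`,
`n ≤ j+1 = jp`, one has `f^{∘(m+n+1)} ∘ d^m = e^{i+1} ∘ f^{∘(m+n)}` as morphisms
`[i-m, j+m] → [i+n+1, j-n]` (the identification of the targets is the `eqToHom` along the
equality of objects). -/
theorem trapezium_equations (ip jp m n : ℕ) (hpos : 0 < ip + jp)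
    (hm : m ≤ ip) (hn : n ≤ jp) :
    dM (ip - m) (jp + m) (by omega) ⟨m, by omega⟩ ≫
        fIter (ip - m) ((jp + m) + 1) (by omega) (m + n + 1) (by omega) =
      (fIter (ip - m) (jp + m) (by omega) (m + n) (by omega) ≫
          eM ((ip - m) + (m + n)) ((jp + m) - (m + n)) (by omega) ⟨ip, by omega⟩) ≫
        eqToHom (DObj.ext2 rfl (by omega)) := by
  refine DHom.ext_val fun x => ?_
  trans if (x : ℕ) < ip then (x : ℕ) else x + 1
  · rw [DHom.comp_toFun, DHom.fIter_toFun_val, DHom.dM_toFun_val, Nat.sub_add_cancel hm]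
  · rw [DHom.comp_toFun, DHom.eqToHom_toFun_val, DHom.comp_toFun, DHom.eM_toFun_val,
      DHom.fIter_toFun_val]
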